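/- arXiv:2009.10845 — 2 statements merged into one kernel-verified Lean document; each statement's English description precedes it below -/
import Mathlib

section
/- For any graph G on n vertices and odd integers k ≥ t ≥ 1, t(P_k; G)^t ≥ t(P_t; G)^k, where t(F;G) = |Hom(F;G)|/n^{|V(F)|} is the homomorphism density. -/
/-- The number of graph homomorphisms from `F` to `G`. -/
noncomputable def homCount {α β : Type*} (F : SimpleGraph α) (G : SimpleGraph β) : ℕ :=
  Nat.card (F →g G)

/-- The homomorphism density `t(F;G) = |Hom(F;G)| / |V(G)|^{|V(F)|}`. -/
noncomputable def homDensity {α β : Type*} [Fintype α] [Fintype β]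
    (F : SimpleGraph α) (G : SimpleGraph β) : ℝ :=
  (homCount F G : ℝ) / (Fintype.card β : ℝ) ^ (Fintype.card α)

/-!
Let `x t` be the density of the path with `t` edges. It suffices to increase the length by two, that
is, to show `x t ^ (t + 2) ≤ x (t + 2) ^ t`. Take a uniformly random homomorphism from the path with
`t` edges, and lengthen it by crossing one of its edges three times instead of once. The log-sum
inequality over the edges of the graph bounds the logarithm of the growth of the number of
homomorphisms from below by the increment, from one end of the tripled edge to the other, of an
expected log-ratio. Summed over all `t` edges these increments telescope, and both boundary terms
are given by the entropy of the end vertex, measured against the uniform distribution.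
-/

open Finset Matrix Real

theorem pow_add_mul_le_pow_of_forall_pow_add_le_pow {R : Type*} [CommSemiring R] [LinearOrder R]
    [IsStrictOrderedRing R] {x : ℕ → R} (hx : ∀ k, 0 ≤ x k) {d : ℕ}
    (hstep : ∀ k, x k ^ (k + d) ≤ x (k + d) ^ k) (t m : ℕ) :
    x t ^ (t + d * m) ≤ x (t + d * m) ^ t := by
  induction m with
  | zero => simp
  | succ m ih =>
    rw [Nat.mul_succ, ← add_assoc]
    set k := t + d * m with hk
    rcases k.eq_zero_or_pos with h0 | hpos
    · obtain rfl : t = 0 := by omega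
      simpa [h0] using hstep 0
    · refine le_of_pow_le_pow_left₀ hpos.ne' (pow_nonneg (hx _) _) ?_
      calc (x t ^ (k + d)) ^ k = (x t ^ k) ^ (k + d) := pow_right_comm ..
        _ ≤ (x k ^ t) ^ (k + d) := pow_le_pow_left₀ (pow_nonneg (hx t) k) ih _
        _ = (x k ^ (k + d)) ^ t := pow_right_comm ..
        _ ≤ (x (k + d) ^ k) ^ t := pow_le_pow_left₀ (pow_nonneg (hx k) _) (hstep k) t
        _ = (x (k + d) ^ t) ^ k := pow_right_comm ..

/-- The log-sum inequality. -/
theorem sum_mul_log_sum_div_sum_le {ι : Type*} {s : Finset ι} {a b : ι → ℝ}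
    (ha : ∀ i ∈ s, 0 ≤ a i) (hb : ∀ i ∈ s, 0 ≤ b i) (hab : ∀ i ∈ s, b i = 0 → a i = 0) :
    (∑ i ∈ s, a i) * log ((∑ i ∈ s, a i) / ∑ i ∈ s, b i) ≤
      ∑ i ∈ s, a i * log (a i / b i) := by
  rcases (sum_nonneg hb).eq_or_lt with hB | hB
  · have ha0 : ∀ i ∈ s, a i = 0 := fun i hi =>
      hab i hi ((sum_eq_zero_iff_of_nonneg hb).mp hB.symm i hi)
    have hsum : ∑ i ∈ s, a i * log (a i / b i) = 0 :=
      sum_eq_zero fun i hi => by rw [ha0 i hi, zero_mul]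
    rw [sum_eq_zero ha0, hsum, zero_mul]
  · have hdiv : ∀ i ∈ s, b i * (a i / b i) = a i := fun i hi => mul_div_cancel_of_imp' (hab i hi)
    have hdiv_log : ∀ i ∈ s, b i * (a i / b i * log (a i / b i)) = a i * log (a i / b i) :=
      fun i hi => by rw [← mul_assoc, hdiv i hi]
    have jensen := convexOn_mul_log.map_centerMass_le hb hB
      fun i hi => Set.mem_Ici.mpr (div_nonneg (ha i hi) (hb i hi))
    simp only [centerMass, smul_eq_mul, Function.comp_apply] at jensen
    rw [sum_congr rfl hdiv, sum_congr rfl hdiv_log, mul_assoc] at jensen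
    rw [div_eq_inv_mul]
    exact le_of_mul_le_mul_left jensen (inv_pos.mpr hB)

section BilinearForm

variable {m n : Type*} [Fintype m] [Fintype n]

theorem dotProduct_mulVec_eq_sum_prod {R : Type*} [NonUnitalSemiring R] (M : Matrix m n R)
    (x : m → R) (y : n → R) : x ⬝ᵥ M *ᵥ y = ∑ p : m × n, x p.1 * (M p.1 p.2 * y p.2) := by
  simp only [dotProduct, mulVec, mul_sum, Fintype.sum_prod_type]

theorem dotProduct_mulVec_mul_log_div_le {M : Matrix m n ℝ} (hM : ∀ u v, 0 ≤ M u v)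
    {x x' : m → ℝ} {y y' : n → ℝ} (hx : 0 ≤ x) (hy : 0 ≤ y)
    (hx' : ∀ u v, 0 < M u v → 0 < x' u) (hy' : ∀ u v, 0 < M u v → 0 < y' v) :
    (x ⬝ᵥ M *ᵥ y) * log ((x ⬝ᵥ M *ᵥ y) / (x' ⬝ᵥ M *ᵥ y')) ≤
      (fun u => x u * log (x u / x' u)) ⬝ᵥ M *ᵥ y +
        x ⬝ᵥ M *ᵥ fun v => y v * log (y v / y' v) := by
  have hM0 (p : m × n) : M p.1 p.2 = 0 ∨ 0 < M p.1 p.2 ∧ 0 < x' p.1 ∧ 0 < y' p.2 :=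
    (hM p.1 p.2).eq_or_lt.imp Eq.symm fun h => ⟨h, hx' _ _ h, hy' _ _ h⟩
  simp only [dotProduct_mulVec_eq_sum_prod, ← sum_add_distrib]
  refine (sum_mul_log_sum_div_sum_le (fun p _ => ?_) (fun p _ => ?_) fun p _ => ?_).trans_eq
    (sum_congr rfl fun p _ => ?_)
  · exact mul_nonneg (hx p.1) (mul_nonneg (hM p.1 p.2) (hy p.2))
  · rcases hM0 p with h | ⟨hMp, hxp, hyp⟩
    · simp [h]
    · positivity
  · rcases hM0 p with h | ⟨hMp, hxp, hyp⟩
    · simp [h]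
    · exact fun h0 => absurd h0 (by positivity)
  · rcases hM0 p with h | ⟨hMp, hxp, hyp⟩
    · simp [h]
    rcases eq_or_ne (x p.1) 0 with hx0 | hx0
    · simp [hx0]
    rcases eq_or_ne (y p.2) 0 with hy0 | hy0
    · simp [hy0]
    rw [mul_div_mul_comm, mul_div_mul_left _ _ hMp.ne', log_mul (by positivity) (by positivity)]
    ring

end BilinearForm

section WalkWeight

variable {V R : Type*} [Fintype V] [DecidableEq V]

/-- The total weight of the walks with `j` steps starting at a given vertex, where the weight of a
walk is the product of the entries of `M` at its steps. -/
def walkWeight [Semiring R] (M : Matrix V V R) (j : ℕ) : V → R := M ^ j *ᵥ 1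

/-- The total weight of all walks with `j` steps; for an adjacency matrix it is the number of
homomorphisms from the path with `j` edges. -/
def totalWalkWeight [Semiring R] (M : Matrix V V R) (j : ℕ) : R := 1 ⬝ᵥ walkWeight M j

@[simp]
theorem walkWeight_zero [Semiring R] (M : Matrix V V R) : walkWeight M 0 = 1 := by
  simp [walkWeight]

theorem walkWeight_succ [Semiring R] (M : Matrix V V R) (j : ℕ) :
    walkWeight M (j + 1) = M *ᵥ walkWeight M j := by
  rw [walkWeight, walkWeight, mulVec_mulVec, pow_succ']

@[simp]
theorem totalWalkWeight_zero [Semiring R] (M : Matrix V V R) :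
    totalWalkWeight M 0 = Fintype.card V := by
  simp [totalWalkWeight]

theorem walkWeight_dotProduct_walkWeight [CommSemiring R] {M : Matrix V V R} (hM : M.IsSymm)
    (i j : ℕ) : walkWeight M i ⬝ᵥ walkWeight M j = totalWalkWeight M (i + j) := by
  rw [totalWalkWeight, walkWeight, walkWeight, walkWeight, ← vecMul_transpose, hM.pow i,
    ← dotProduct_mulVec, mulVec_mulVec, pow_add]

theorem sum_mul_prod_eq_dotProduct_walkWeight [CommSemiring R] (M : Matrix V V R) (j : ℕ)
    (x : V → R) :
    ∑ φ : Fin (j + 1) → V, x (φ 0) * ∏ i : Fin j, M (φ i.castSucc) (φ i.succ) =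
      x ⬝ᵥ walkWeight M j := by
  induction j generalizing x with
  | zero => simp [dotProduct, ← (Equiv.funUnique (Fin 1) V).sum_comp]
  | succ j ih =>
    rw [walkWeight_succ, dotProduct_mulVec, ← ih, ← (Fin.consEquiv fun _ => V).sum_comp,
      Fintype.sum_prod_type_right]
    refine sum_congr rfl fun φ _ => ?_
    simp [Fin.consEquiv, Fin.prod_univ_succ, vecMul, dotProduct, sum_mul, mul_assoc]

theorem sum_prod_eq_totalWalkWeight [CommSemiring R] (M : Matrix V V R) (j : ℕ) :
    ∑ φ : Fin (j + 1) → V, ∏ i : Fin j, M (φ i.castSucc) (φ i.succ) = totalWalkWeight M j := by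
  simpa only [Pi.one_apply, one_mul] using! sum_mul_prod_eq_dotProduct_walkWeight M j 1

section NonnegSymmetric

variable {M : Matrix V V ℝ}

theorem walkWeight_nonneg (hM : ∀ u v, 0 ≤ M u v) (j : ℕ) : 0 ≤ walkWeight M j := by
  induction j with
  | zero => simp
  | succ j ih =>
    rw [walkWeight_succ]
    exact fun u => dotProduct_nonneg_of_nonneg (hM u) ih

theorem walkWeight_pos (hM : ∀ u v, 0 ≤ M u v) (hsymm : M.IsSymm) (j : ℕ) {u v : V}
    (huv : 0 < M u v) : 0 < walkWeight M j u := by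
  induction j generalizing u v with
  | zero => simp
  | succ j ih =>
    rw [walkWeight_succ]
    exact sum_pos' (fun w _ => mul_nonneg (hM u w) (walkWeight_nonneg hM j w))
      ⟨v, mem_univ v, mul_pos huv (ih (hsymm.apply u v ▸ huv))⟩

theorem totalWalkWeight_nonneg (hM : ∀ u v, 0 ≤ M u v) (j : ℕ) : 0 ≤ totalWalkWeight M j :=
  dotProduct_nonneg_of_nonneg zero_le_one (walkWeight_nonneg hM j)

theorem totalWalkWeight_pos (hM : ∀ u v, 0 ≤ M u v) (hsymm : M.IsSymm) (hM0 : M ≠ 0) (j : ℕ) :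
    0 < totalWalkWeight M j := by
  obtain ⟨u, v, huv⟩ : ∃ u v, M u v ≠ 0 := by
    by_contra! h
    exact hM0 (Matrix.ext h)
  have hu : 0 < walkWeight M j u := walkWeight_pos hM hsymm j ((hM u v).lt_of_ne' huv)
  rw [totalWalkWeight, one_dotProduct]
  exact sum_pos' (fun w _ => walkWeight_nonneg hM j w) ⟨u, mem_univ u, hu⟩

/-- Up to normalisation, the expected value of the log-ratio of the `i`-step to the `j`-step walk
weight at the `i`-th vertex of a random walk with `i + j` steps, chosen with probability
proportional to its weight. -/
noncomputable def walkLogRatio (M : Matrix V V ℝ) (i j : ℕ) : ℝ :=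
  ∑ v, walkWeight M i v * walkWeight M j v * log (walkWeight M i v / walkWeight M j v)

theorem walkLogRatio_swap (i j : ℕ) : walkLogRatio M j i = -walkLogRatio M i j := by
  rw [walkLogRatio, walkLogRatio, ← sum_neg_distrib]
  refine sum_congr rfl fun v _ => ?_
  rw [← inv_div, log_inv]
  ring

/-- Write `w` for `walkWeight M`. The edge `(u, v)` is step `j + 1` of walks with `i + j + 1` steps
of total weight `M u v * w j u * w i v`. Crossing it as `u, v, u, v` makes `(v, u)` the middle edge
of a walk with `i + j + 3` steps, and all walks with this middle edge have total weight
`M u v * w (i + 1) u * w (j + 1) v`. The log-sum inequality compares these two weights. -/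
theorem totalWalkWeight_mul_log_div_le_walkLogRatio_sub (hM : ∀ u v, 0 ≤ M u v)
    (hsymm : M.IsSymm) (i j : ℕ) :
    totalWalkWeight M (i + j + 1) *
        log (totalWalkWeight M (i + j + 1) / totalWalkWeight M (i + j + 3)) ≤
      walkLogRatio M i (j + 1) - walkLogRatio M (i + 1) j := by
  have hedge (k l : ℕ) :
      walkWeight M k ⬝ᵥ M *ᵥ walkWeight M l = totalWalkWeight M (k + l + 1) := by
    rw [← walkWeight_succ, walkWeight_dotProduct_walkWeight hsymm, add_assoc]
  have hleft : (fun u => walkWeight M j u * log (walkWeight M j u / walkWeight M (i + 1) u)) ⬝ᵥ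
      M *ᵥ walkWeight M i = walkLogRatio M j (i + 1) := by
    rw [← walkWeight_succ]
    exact sum_congr rfl fun u _ => mul_right_comm ..
  have hright : (walkWeight M j ⬝ᵥ
      M *ᵥ fun v => walkWeight M i v * log (walkWeight M i v / walkWeight M (j + 1) v)) =
        walkLogRatio M i (j + 1) := by
    rw [dotProduct_mulVec, ← mulVec_transpose, hsymm, ← walkWeight_succ, dotProduct_comm]
    exact sum_congr rfl fun v _ => mul_right_comm ..
  have hlogsum := dotProduct_mulVec_mul_log_div_le hM
    (walkWeight_nonneg hM j) (walkWeight_nonneg hM i)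
    (fun _ _ huv => walkWeight_pos hM hsymm (i + 1) huv)
    (fun u v huv => walkWeight_pos hM hsymm (j + 1) (hsymm.apply u v ▸ huv))
  rw [hleft, hright, hedge, hedge, walkLogRatio_swap (i + 1) j, add_comm j i,
    show i + 1 + (j + 1) + 1 = i + j + 3 by ring] at hlogsum
  linarith

theorem totalWalkWeight_mul_log_div_card_le_walkLogRatio (hM : ∀ u v, 0 ≤ M u v) (t : ℕ) :
    totalWalkWeight M t * log (totalWalkWeight M t / Fintype.card V) ≤ walkLogRatio M t 0 := by
  simpa [walkLogRatio, totalWalkWeight, one_dotProduct] using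
    sum_mul_log_sum_div_sum_le (s := univ) (a := walkWeight M t) (b := 1)
      (fun v _ => walkWeight_nonneg hM t v) (by simp) (by simp)

theorem mul_totalWalkWeight_mul_log_div_add_two_le (hM : ∀ u v, 0 ≤ M u v) (hsymm : M.IsSymm)
    (t : ℕ) :
    t * (totalWalkWeight M t * log (totalWalkWeight M t / totalWalkWeight M (t + 2))) ≤
      -2 * (totalWalkWeight M t * log (totalWalkWeight M t / Fintype.card V)) := by
  have hstep : ∀ i ∈ range t,
      totalWalkWeight M t * log (totalWalkWeight M t / totalWalkWeight M (t + 2)) ≤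
        walkLogRatio M i (t - i) - walkLogRatio M (i + 1) (t - (i + 1)) := by
    intro i hi
    obtain ⟨j, rfl⟩ := Nat.exists_eq_add_of_lt (mem_range.mp hi)
    convert totalWalkWeight_mul_log_div_le_walkLogRatio_sub hM hsymm i j using 3 <;> omega
  calc t * (totalWalkWeight M t * log (totalWalkWeight M t / totalWalkWeight M (t + 2)))
    _ ≤ ∑ i ∈ range t, (walkLogRatio M i (t - i) - walkLogRatio M (i + 1) (t - (i + 1))) := by
      simpa using card_nsmul_le_sum (range t) _ _ hstep
    _ = walkLogRatio M 0 t - walkLogRatio M t 0 := by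
      simpa using sum_range_sub' (fun i => walkLogRatio M i (t - i)) t
    _ = -2 * walkLogRatio M t 0 := by
      rw [walkLogRatio_swap t 0]
      ring
    _ ≤ _ := mul_le_mul_of_nonpos_left
      (totalWalkWeight_mul_log_div_card_le_walkLogRatio hM t) (by norm_num)

theorem totalWalkWeight_pow_add_two_le (hM : ∀ u v, 0 ≤ M u v) (hsymm : M.IsSymm) (t : ℕ) :
    totalWalkWeight M t ^ (t + 2) ≤
      (Fintype.card V : ℝ) ^ 2 * totalWalkWeight M (t + 2) ^ t := by
  rcases t.eq_zero_or_pos with rfl | ht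
  · simp
  rcases eq_or_ne M 0 with rfl | hM0
  · simp [totalWalkWeight, walkWeight, ht.ne']
  have hW : 0 < totalWalkWeight M t := totalWalkWeight_pos hM hsymm hM0 t
  have hW' : 0 < totalWalkWeight M (t + 2) := totalWalkWeight_pos hM hsymm hM0 (t + 2)
  have hcard : (0 : ℝ) < Fintype.card V := by simpa using totalWalkWeight_pos hM hsymm hM0 0
  have hlog := mul_totalWalkWeight_mul_log_div_add_two_le hM hsymm t
  rw [log_div hW.ne' hW'.ne', log_div hW.ne' hcard.ne'] at hlog
  rw [← log_le_log_iff (by positivity) (by positivity),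
    log_mul (by positivity) (by positivity), log_pow, log_pow, log_pow]
  push_cast
  refine le_of_mul_le_mul_left ?_ hW
  linarith

theorem totalWalkWeight_div_pow_le (hM : ∀ u v, 0 ≤ M u v) (hsymm : M.IsSymm) (t m : ℕ) :
    (totalWalkWeight M t / (Fintype.card V : ℝ) ^ (t + 1)) ^ (t + 2 * m) ≤
      (totalWalkWeight M (t + 2 * m) / (Fintype.card V : ℝ) ^ (t + 2 * m + 1)) ^ t := by
  refine pow_add_mul_le_pow_of_forall_pow_add_le_pow
    (x := fun j => totalWalkWeight M j / (Fintype.card V : ℝ) ^ (j + 1))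
    (fun k => div_nonneg (totalWalkWeight_nonneg hM k) (by positivity)) (fun k => ?_) t m
  rcases (Nat.cast_nonneg (α := ℝ) (Fintype.card V)).eq_or_lt with h0 | hpos
  · simp [← h0]
  rw [div_pow, div_pow, div_le_div_iff₀ (by positivity) (by positivity)]
  calc totalWalkWeight M k ^ (k + 2) * ((Fintype.card V : ℝ) ^ (k + 2 + 1)) ^ k
    _ ≤ (Fintype.card V : ℝ) ^ 2 * totalWalkWeight M (k + 2) ^ k *
        ((Fintype.card V : ℝ) ^ (k + 2 + 1)) ^ k := by
      gcongr
      exact totalWalkWeight_pow_add_two_le hM hsymm k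
    _ = totalWalkWeight M (k + 2) ^ k * ((Fintype.card V : ℝ) ^ (k + 1)) ^ (k + 2) := by ring

end NonnegSymmetric

end WalkWeight

/-- Homomorphisms from a path are sequences of consecutively adjacent vertices. -/
def pathGraphHomEquiv {V : Type*} (G : SimpleGraph V) (j : ℕ) :
    (SimpleGraph.pathGraph (j + 1) →g G) ≃
      {φ : Fin (j + 1) → V // ∀ i : Fin j, G.Adj (φ i.castSucc) (φ i.succ)} where
  toFun f := ⟨f, fun i => f.map_rel (by simp [SimpleGraph.pathGraph_adj])⟩
  invFun φ := ⟨φ.1, by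
    have hadj (a b : Fin (j + 1)) (h : a.val + 1 = b.val) : G.Adj (φ.1 a) (φ.1 b) := by
      rw [show b = Fin.succ ⟨a, by omega⟩ from Fin.ext h.symm]
      exact φ.2 ⟨a, by omega⟩
    intro a b hab
    exact (SimpleGraph.pathGraph_adj.mp hab).elim (hadj a b) fun h => (hadj b a h).symm⟩
  left_inv _ := rfl
  right_inv _ := rfl

section Graph

variable {V : Type*} [Fintype V]

theorem homCount_pathGraph [DecidableEq V] (G : SimpleGraph V) [DecidableRel G.Adj] (j : ℕ) :
    (homCount (SimpleGraph.pathGraph (j + 1)) G : ℝ) = totalWalkWeight (G.adjMatrix ℝ) j := by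
  rw [homCount, Nat.card_congr (pathGraphHomEquiv G j), Nat.card_eq_fintype_card,
    Fintype.card_subtype, ← sum_prod_eq_totalWalkWeight]
  simp [SimpleGraph.adjMatrix_apply, prod_ite_zero]

theorem es_density_general (G : SimpleGraph V) {k t : ℕ} (hkt : t ≡ k [MOD 2]) (htk : t ≤ k) :
    homDensity (SimpleGraph.pathGraph (t + 1)) G ^ k ≤
      homDensity (SimpleGraph.pathGraph (k + 1)) G ^ t := by
  classical
  obtain ⟨m, hm⟩ := (Nat.modEq_iff_dvd' htk).mp hkt
  obtain rfl : k = t + 2 * m := by omega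
  have hadj : ∀ u v, 0 ≤ G.adjMatrix ℝ u v := fun u v => by
    rw [SimpleGraph.adjMatrix_apply]
    positivity
  simpa only [homDensity, homCount_pathGraph, Fintype.card_fin] using
    totalWalkWeight_div_pow_le hadj (G.isSymm_adjMatrix (α := ℝ)) t m

end Graph

/-- For odd `k ≥ t ≥ 1`, `t(P_k; G)^t ≥ t(P_t; G)^k`, where the path with `j`
edges is `SimpleGraph.pathGraph (j+1)`. -/
theorem es_density (n k t : ℕ) (G : SimpleGraph (Fin n))
    (hk : Odd k) (ht : Odd t) (ht1 : 1 ≤ t) (htk : t ≤ k) :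
    homDensity (SimpleGraph.pathGraph (k + 1)) G ^ t ≥
      homDensity (SimpleGraph.pathGraph (t + 1)) G ^ k :=
  es_density_general G ((Nat.odd_iff.mp ht).trans (Nat.odd_iff.mp hk).symm) htk
end

section
/- For any graph G on n vertices with at least one edge and odd integers k ≥ t ≥ 1, w_k(G)^{1/k} ≥ w_t(G)^{1/t}: the sequence of odd-index normalized walk counts w_j(G)^{1/j} is non-decreasing along odd j. -/
/-- The number of walks of length `k` in a graph `G` on vertex set `Fin n`. -/
noncomputable def walkCount (n k : ℕ) (G : SimpleGraph (Fin n)) : ℕ :=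
  Nat.card {f : Fin (k + 1) → Fin n //
    ∀ i : Fin k, G.Adj (f i.castSucc) (f i.succ)}

/-- `w_j(G)`: the number of walks of length `j` in `G` divided by `n`. -/
noncomputable def w (n j : ℕ) (G : SimpleGraph (Fin n)) : ℝ :=
  (walkCount n j G : ℝ) / n

/-!
Let `A` be a symmetric matrix and `φ` a vector, both nonnegative, and put `fᵢ = Aⁱ φ` and
`W k = ⟨φ, Aᵏ φ⟩`, so that `∑ₓ fᵢ x * fⱼ x = W (i + j)`. Write
`D i j = ∑ₓ fᵢ x * fⱼ x * log (fᵢ x / fⱼ x)`, which is antisymmetric. For `i + j + 1 = k`, the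
log-sum inequality compares the weights `fᵢ x * A x y * fⱼ y`, of total `W k`, with
`fⱼ₊₁ x * A x y * fᵢ₊₁ y`, of total `W (k + 2)`; in the ratio `A x y` cancels, which leaves
`W k * log (W k / W (k + 2)) ≤ D i (j + 1) - D (i + 1) j`. The right side telescopes over `i < k`
to `D 0 k - D k 0 = -2 * D k 0`, and by the log-sum inequality again
`D k 0 ≥ W k * log (W k / W 0)`. Hence `(W k / W 0) ^ (k + 2) ≤ (W (k + 2) / W 0) ^ k`.
Walk counts are the case where `A` is the adjacency matrix and `φ = 1`.
-/

open Matrix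

theorem sum_mul_log_sum_div_sum_le_s18 {ι : Type*} (s : Finset ι) {p q : ι → ℝ}
    (hp : ∀ i ∈ s, 0 ≤ p i) (hq : ∀ i ∈ s, 0 ≤ q i) (hpq : ∀ i ∈ s, q i = 0 → p i = 0) :
    (∑ i ∈ s, p i) * Real.log ((∑ i ∈ s, p i) / ∑ i ∈ s, q i) ≤
      ∑ i ∈ s, p i * Real.log (p i / q i) := by
  have hcancel : ∀ i ∈ s, q i * (p i / q i) = p i := fun i hi =>
    mul_div_cancel_of_imp' (hpq i hi)
  rcases (Finset.sum_nonneg hq).eq_or_lt' with hQ | hQ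
  · have hp0 : ∀ i ∈ s, p i = 0 := fun i hi =>
      hpq i hi ((Finset.sum_eq_zero_iff_of_nonneg hq).mp hQ i hi)
    rw [Finset.sum_eq_zero hp0, zero_mul, Finset.sum_eq_zero fun i hi => by rw [hp0 i hi, zero_mul]]
  · have hjensen := Real.convexOn_mul_log.map_centerMass_le hq hQ fun i hi =>
      Set.mem_Ici.mpr (div_nonneg (hp i hi) (hq i hi))
    simp only [Finset.centerMass, smul_eq_mul, Function.comp_apply, ← mul_assoc] at hjensen
    rw [Finset.sum_congr rfl hcancel,
      Finset.sum_congr rfl fun i hi => congrArg (· * Real.log (p i / q i)) (hcancel i hi),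
      mul_assoc, mul_le_mul_iff_right₀ (inv_pos.mpr hQ), inv_mul_eq_div] at hjensen
    exact hjensen

theorem rpow_one_div_le_rpow_one_div_of_pow_le_pow {a b : ℝ} (ha : 0 ≤ a) (hb : 0 ≤ b) {m n : ℕ}
    (hm : m ≠ 0) (hn : n ≠ 0) (h : a ^ n ≤ b ^ m) :
    a ^ ((1 : ℝ) / m) ≤ b ^ ((1 : ℝ) / n) := by
  rw [one_div, one_div, ← pow_le_pow_iff_left₀ (by positivity) (by positivity) (mul_ne_zero hm hn)]
  calc (a ^ (m⁻¹ : ℝ)) ^ (m * n) = a ^ n := by rw [pow_mul, Real.rpow_inv_natCast_pow ha hm]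
    _ ≤ b ^ m := h
    _ = (b ^ (n⁻¹ : ℝ)) ^ (m * n) := by rw [mul_comm, pow_mul, Real.rpow_inv_natCast_pow hb hn]

theorem mulVec_pow_mulVec {R V : Type*} [Semiring R] [Fintype V] [DecidableEq V]
    (A : Matrix V V R) (φ : V → R) (k : ℕ) : A *ᵥ (A ^ k *ᵥ φ) = A ^ (k + 1) *ᵥ φ := by
  rw [mulVec_mulVec, pow_succ']

section CommSemiring

variable {R V : Type*} [CommSemiring R] [Fintype V] [DecidableEq V] {A : Matrix V V R}

theorem pow_mulVec_dotProduct_pow_mulVec (hs : A.IsSymm) (φ ψ : V → R) (i j : ℕ) :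
    (A ^ i *ᵥ φ) ⬝ᵥ (A ^ j *ᵥ ψ) = φ ⬝ᵥ A ^ (i + j) *ᵥ ψ := by
  rw [pow_add, ← mulVec_mulVec, dotProduct_mulVec φ, ← mulVec_transpose, (hs.pow i).eq]

theorem dotProduct_pow_mulVec_eq_sum_prod (u v : V → R) (k : ℕ) :
    u ⬝ᵥ A ^ k *ᵥ v = ∑ f : Fin (k + 1) → V,
      u (f 0) * (∏ i : Fin k, A (f i.castSucc) (f i.succ)) * v (f (Fin.last k)) := by
  induction k generalizing u with
  | zero =>
    rw [← (Equiv.funUnique (Fin 1) V).symm.sum_comp]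
    simp [dotProduct]
  | succ k ih =>
    rw [← mulVec_pow_mulVec, dotProduct_mulVec, ← (Fin.consEquiv fun _ => V).sum_comp,
      Fintype.sum_prod_type_right, ih]
    simp only [Fin.consEquiv_apply, Fin.prod_univ_succ, Fin.cons_zero, Fin.cons_succ,
      Fin.castSucc_zero, ← Fin.succ_castSucc, ← Fin.succ_last, vecMul, dotProduct, Finset.sum_mul,
      mul_assoc]

end CommSemiring

section OrderedSemiring

variable {R V W : Type*} [Semiring R] [PartialOrder R] [IsOrderedRing R] [Fintype W]
  {A : Matrix V W R} {v : W → R}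

theorem mulVec_nonneg (hA : ∀ x y, 0 ≤ A x y) (hv : 0 ≤ v) : 0 ≤ A *ᵥ v := fun x =>
  dotProduct_nonneg_of_nonneg (hA x) hv

theorem mul_eq_zero_of_mulVec_apply_eq_zero (hA : ∀ x y, 0 ≤ A x y) (hv : 0 ≤ v) {x : V}
    (h : (A *ᵥ v) x = 0) (y : W) : A x y * v y = 0 :=
  (Finset.sum_eq_zero_iff_of_nonneg fun y _ => mul_nonneg (hA x y) (hv y)).mp h y
    (Finset.mem_univ y)

end OrderedSemiring

/-- The sum `∑ u v log (u / v)`, the difference of the entropy-like sums `∑ u v log u` and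
`∑ u v log v`. A term with `u x = 0` or `v x = 0` vanishes, whatever the value of the logarithm. -/
noncomputable def logRatioSum {V : Type*} [Fintype V] (u v : V → ℝ) : ℝ :=
  ∑ x, u x * v x * Real.log (u x / v x)

section LogRatioSum

variable {V : Type*} [Fintype V]

theorem logRatioSum_swap (u v : V → ℝ) : logRatioSum u v = -logRatioSum v u := by
  rw [logRatioSum, logRatioSum, ← Finset.sum_neg_distrib]
  refine Finset.sum_congr rfl fun x _ => ?_
  rw [← inv_div (v x), Real.log_inv]
  ring

theorem dotProduct_mul_log_div_le_logRatioSum {u v : V → ℝ} (hu : 0 ≤ u) (hv : 0 ≤ v) :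
    u ⬝ᵥ v * Real.log (u ⬝ᵥ v / v ⬝ᵥ v) ≤ logRatioSum u v := by
  refine (sum_mul_log_sum_div_sum_le_s18 Finset.univ (fun x _ => mul_nonneg (hu x) (hv x))
    (fun x _ => mul_nonneg (hv x) (hv x))
    fun x _ h => by rw [mul_self_eq_zero.mp h, mul_zero]).trans_eq ?_
  refine Finset.sum_congr rfl fun x _ => ?_
  rcases eq_or_ne (v x) 0 with h | h
  · simp only [h, mul_zero, zero_mul]
  · rw [mul_div_mul_right _ _ h]

end LogRatioSum

/-- The term of the bilinear form `u ⬝ᵥ A *ᵥ v` indexed by the pair `z` of a row and a column. If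
`u x` and `v y` count walks ending at `x` and at `y`, it counts the walks obtained by joining the
two kinds along the edge `z = (x, y)`. -/
def edgeWeight {V W : Type*} (A : Matrix V W ℝ) (u : V → ℝ) (v : W → ℝ) (z : V × W) : ℝ :=
  u z.1 * A z.1 z.2 * v z.2

section EdgeWeight

variable {V W : Type*} {A : Matrix V W ℝ} {u : V → ℝ} {v : W → ℝ}

theorem edgeWeight_nonneg (hA : ∀ x y, 0 ≤ A x y) (hu : 0 ≤ u) (hv : 0 ≤ v) (z : V × W) :
    0 ≤ edgeWeight A u v z :=
  mul_nonneg (mul_nonneg (hu _) (hA _ _)) (hv _)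

variable [Fintype V] [Fintype W]

theorem sum_edgeWeight (A : Matrix V W ℝ) (u : V → ℝ) (v : W → ℝ) :
    ∑ z, edgeWeight A u v z = u ⬝ᵥ A *ᵥ v := by
  simp only [edgeWeight, dotProduct, mulVec, Finset.mul_sum, Fintype.sum_prod_type, mul_assoc]

theorem sum_edgeWeight_mul_fst (A : Matrix V W ℝ) (u : V → ℝ) (v : W → ℝ) (g : V → ℝ) :
    ∑ z, edgeWeight A u v z * g z.1 = ∑ x, u x * (A *ᵥ v) x * g x := by
  simp only [edgeWeight, mulVec, dotProduct, Fintype.sum_prod_type, Finset.mul_sum, Finset.sum_mul,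
    mul_assoc]

theorem sum_edgeWeight_mul_snd (A : Matrix V W ℝ) (u : V → ℝ) (v : W → ℝ) (g : W → ℝ) :
    ∑ z, edgeWeight A u v z * g z.2 = ∑ y, v y * (Aᵀ *ᵥ u) y * g y := by
  simp only [edgeWeight, mulVec, dotProduct, Fintype.sum_prod_type_right, Finset.mul_sum,
    Finset.sum_mul, transpose_apply]
  exact Finset.sum_congr rfl fun y _ => Finset.sum_congr rfl fun x _ => by ring

theorem edgeWeight_eq_zero_of_edgeWeight_mulVec_eq_zero (hA : ∀ x y, 0 ≤ A x y) (hu : 0 ≤ u)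
    (hv : 0 ≤ v) {z : V × W} (h : edgeWeight A (A *ᵥ v) (Aᵀ *ᵥ u) z = 0) :
    edgeWeight A u v z = 0 := by
  obtain ⟨x, y⟩ := z
  simp only [edgeWeight, mul_eq_zero] at h ⊢
  rcases h with (hAv | hAxy) | hAu
  · have := mul_eq_zero_of_mulVec_apply_eq_zero hA hv hAv y
    grind
  · exact .inl (.inr hAxy)
  · have : A x y * u x = 0 := mul_eq_zero_of_mulVec_apply_eq_zero (fun y x => hA x y) hu hAu x
    grind

theorem edgeWeight_mul_log_div (hA : ∀ x y, 0 ≤ A x y) (hu : 0 ≤ u) (hv : 0 ≤ v) (z : V × W) :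
    edgeWeight A u v z * Real.log (edgeWeight A u v z / edgeWeight A (A *ᵥ v) (Aᵀ *ᵥ u) z) =
      edgeWeight A u v z * Real.log (u z.1 / (A *ᵥ v) z.1) +
        edgeWeight A u v z * Real.log (v z.2 / (Aᵀ *ᵥ u) z.2) := by
  rcases eq_or_ne (edgeWeight A u v z) 0 with hp | hp
  · simp only [hp, zero_mul, add_zero]
  · have hq := mt (edgeWeight_eq_zero_of_edgeWeight_mulVec_eq_zero hA hu hv) hp
    rw [← mul_add]
    simp only [edgeWeight, mul_ne_zero_iff] at hp hq ⊢
    rw [← Real.log_mul (div_ne_zero hp.1.1 hq.1.1) (div_ne_zero hp.2 hq.2),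
      mul_div_mul_comm, mul_div_mul_right _ _ hp.1.2]

theorem dotProduct_mulVec_mul_log_le_logRatioSum (hA : ∀ x y, 0 ≤ A x y) (hu : 0 ≤ u)
    (hv : 0 ≤ v) :
    u ⬝ᵥ A *ᵥ v * Real.log (u ⬝ᵥ A *ᵥ v / (A *ᵥ v) ⬝ᵥ A *ᵥ (Aᵀ *ᵥ u)) ≤
      logRatioSum u (A *ᵥ v) + logRatioSum v (Aᵀ *ᵥ u) := by
  have hAv := mulVec_nonneg hA hv
  have hAu : 0 ≤ Aᵀ *ᵥ u := mulVec_nonneg (fun y x => hA x y) hu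
  have hlogsum := sum_mul_log_sum_div_sum_le_s18 Finset.univ
    (fun z _ => edgeWeight_nonneg hA hu hv z) (fun z _ => edgeWeight_nonneg hA hAv hAu z)
    fun z _ => edgeWeight_eq_zero_of_edgeWeight_mulVec_eq_zero hA hu hv
  simp only [edgeWeight_mul_log_div hA hu hv, Finset.sum_add_distrib] at hlogsum
  rwa [sum_edgeWeight, sum_edgeWeight,
    sum_edgeWeight_mul_fst A u v fun x => Real.log (u x / (A *ᵥ v) x),
    sum_edgeWeight_mul_snd A u v fun y => Real.log (v y / (Aᵀ *ᵥ u) y)] at hlogsum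

theorem dotProduct_mulVec_eq_zero_of_mulVec_dotProduct_eq_zero (hA : ∀ x y, 0 ≤ A x y)
    (hu : 0 ≤ u) (hv : 0 ≤ v) (h : (A *ᵥ v) ⬝ᵥ A *ᵥ (Aᵀ *ᵥ u) = 0) : u ⬝ᵥ A *ᵥ v = 0 := by
  have hAv := mulVec_nonneg hA hv
  have hAu : 0 ≤ Aᵀ *ᵥ u := mulVec_nonneg (fun y x => hA x y) hu
  rw [← sum_edgeWeight] at h ⊢
  have hterm := (Finset.sum_eq_zero_iff_of_nonneg fun z _ => edgeWeight_nonneg hA hAv hAu z).mp h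
  exact Finset.sum_eq_zero fun z hz =>
    edgeWeight_eq_zero_of_edgeWeight_mulVec_eq_zero hA hu hv (hterm z hz)

end EdgeWeight

/-- The `k`-th moment `⟨φ, Aᵏ φ⟩ / ⟨φ, φ⟩` of the matrix `A` at the vector `φ`. For an adjacency
matrix and `φ = 1` it is the number of walks of length `k` per vertex. -/
noncomputable def moment {V : Type*} [Fintype V] [DecidableEq V] (A : Matrix V V ℝ) (φ : V → ℝ)
    (k : ℕ) : ℝ :=
  φ ⬝ᵥ A ^ k *ᵥ φ / φ ⬝ᵥ φ

section Moment

variable {V : Type*} [Fintype V] [DecidableEq V] {A : Matrix V V ℝ} {φ : V → ℝ}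

theorem moment_zero (hφ₀ : φ ≠ 0) : moment A φ 0 = 1 := by
  rw [moment, pow_zero, one_mulVec, div_self (dotProduct_self_eq_zero.not.mpr hφ₀)]

theorem pow_mulVec_nonneg (hA : ∀ x y, 0 ≤ A x y) (hφ : 0 ≤ φ) (k : ℕ) : 0 ≤ A ^ k *ᵥ φ :=
  mulVec_nonneg (pow_apply_nonneg hA k) hφ

theorem moment_nonneg (hA : ∀ x y, 0 ≤ A x y) (hφ : 0 ≤ φ) (k : ℕ) : 0 ≤ moment A φ k :=
  div_nonneg (dotProduct_nonneg_of_nonneg hφ (pow_mulVec_nonneg hA hφ k))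
    (dotProduct_nonneg_of_nonneg hφ hφ)

theorem mul_log_div_le_logRatioSum_sub (hA : ∀ x y, 0 ≤ A x y) (hs : A.IsSymm) (hφ : 0 ≤ φ)
    (i j : ℕ) :
    φ ⬝ᵥ A ^ (i + j + 1) *ᵥ φ *
        Real.log (φ ⬝ᵥ A ^ (i + j + 1) *ᵥ φ / φ ⬝ᵥ A ^ (i + j + 1 + 2) *ᵥ φ) ≤
      logRatioSum (A ^ i *ᵥ φ) (A ^ (j + 1) *ᵥ φ) -
        logRatioSum (A ^ (i + 1) *ᵥ φ) (A ^ j *ᵥ φ) := by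
  have hedge := dotProduct_mulVec_mul_log_le_logRatioSum hA (pow_mulVec_nonneg hA hφ i)
    (pow_mulVec_nonneg hA hφ j)
  rw [hs.eq] at hedge
  simp only [mulVec_pow_mulVec, pow_mulVec_dotProduct_pow_mulVec hs] at hedge
  rwa [show j + 1 + (i + 1 + 1) = i + j + 1 + 2 by ring, ← add_assoc,
    logRatioSum_swap (A ^ j *ᵥ φ), ← sub_eq_add_neg] at hedge

theorem nsmul_mul_log_div_le_logRatioSum_sub (hA : ∀ x y, 0 ≤ A x y) (hs : A.IsSymm) (hφ : 0 ≤ φ)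
    (i j : ℕ) :
    i • (φ ⬝ᵥ A ^ (i + j) *ᵥ φ *
        Real.log (φ ⬝ᵥ A ^ (i + j) *ᵥ φ / φ ⬝ᵥ A ^ (i + j + 2) *ᵥ φ)) ≤
      logRatioSum φ (A ^ (i + j) *ᵥ φ) - logRatioSum (A ^ i *ᵥ φ) (A ^ j *ᵥ φ) := by
  induction i generalizing j with
  | zero => simp
  | succ i ih =>
    have hstep := mul_log_div_le_logRatioSum_sub hA hs hφ i j
    have hprev := ih (j + 1)
    rw [← add_assoc] at hprev
    rw [add_right_comm i 1 j, succ_nsmul]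
    linarith

theorem mul_log_div_add_two_mul_log_div_nonpos (hA : ∀ x y, 0 ≤ A x y) (hs : A.IsSymm)
    (hφ : 0 ≤ φ) {k : ℕ} (hk : 0 < φ ⬝ᵥ A ^ k *ᵥ φ) :
    k * Real.log (φ ⬝ᵥ A ^ k *ᵥ φ / φ ⬝ᵥ A ^ (k + 2) *ᵥ φ) +
      2 * Real.log (φ ⬝ᵥ A ^ k *ᵥ φ / φ ⬝ᵥ φ) ≤ 0 := by
  have htelescope := nsmul_mul_log_div_le_logRatioSum_sub hA hs hφ k 0
  rw [add_zero, pow_zero, one_mulVec, logRatioSum_swap φ, nsmul_eq_mul] at htelescope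
  have hend := dotProduct_mul_log_div_le_logRatioSum (pow_mulVec_nonneg hA hφ k) hφ
  rw [dotProduct_comm] at hend
  refine nonpos_of_mul_nonpos_right ?_ hk
  linarith

theorem moment_add_two_pos (hA : ∀ x y, 0 ≤ A x y) (hs : A.IsSymm) (hφ : 0 ≤ φ) {k : ℕ}
    (hk : k ≠ 0) (h : 0 < moment A φ k) : 0 < moment A φ (k + 2) := by
  obtain ⟨j, rfl⟩ := Nat.exists_eq_succ_of_ne_zero hk
  obtain ⟨hnum, hden⟩ := div_ne_zero_iff.mp h.ne'
  refine (moment_nonneg hA hφ _).lt_of_ne' (div_ne_zero (mt (fun hzero => ?_) hnum) hden)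
  rw [Nat.succ_eq_add_one, ← mulVec_pow_mulVec]
  refine dotProduct_mulVec_eq_zero_of_mulVec_dotProduct_eq_zero hA hφ (pow_mulVec_nonneg hA hφ j) ?_
  rwa [hs.eq, mulVec_pow_mulVec, mulVec_mulVec, ← pow_two, pow_mulVec_dotProduct_pow_mulVec hs]

theorem moment_pow_add_two_le (hA : ∀ x y, 0 ≤ A x y) (hs : A.IsSymm) (hφ : 0 ≤ φ) (hφ₀ : φ ≠ 0)
    (k : ℕ) : moment A φ k ^ (k + 2) ≤ moment A φ (k + 2) ^ k := by
  rcases eq_or_ne k 0 with rfl | hk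
  · rw [moment_zero hφ₀, one_pow, pow_zero]
  rcases (moment_nonneg hA hφ k).eq_or_lt' with hzero | hpos
  · rw [hzero, zero_pow (by omega)]
    exact pow_nonneg (moment_nonneg hA hφ _) _
  have hpos' := moment_add_two_pos hA hs hφ hk hpos
  have hden : φ ⬝ᵥ φ ≠ 0 := dotProduct_self_eq_zero.not.mpr hφ₀
  have hnum : 0 < φ ⬝ᵥ A ^ k *ᵥ φ :=
    (dotProduct_nonneg_of_nonneg hφ (pow_mulVec_nonneg hA hφ k)).lt_of_ne'
      (div_ne_zero_iff.mp hpos.ne').1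
  have hlog := mul_log_div_add_two_mul_log_div_nonpos hA hs hφ hnum
  rw [← div_div_div_cancel_right₀ hden, ← moment, ← moment,
    Real.log_div hpos.ne' hpos'.ne'] at hlog
  rw [← Real.log_le_log_iff (pow_pos hpos _) (pow_pos hpos' _), Real.log_pow, Real.log_pow]
  push_cast
  linarith

theorem walk_root_mono_general (hA : ∀ x y, 0 ≤ A x y) (hs : A.IsSymm) (hφ : 0 ≤ φ) (hφ₀ : φ ≠ 0)
    {t k : ℕ} (ht : 0 < t) (htk : t ≤ k) (hparity : Even (k - t)) :
    moment A φ t ^ ((1 : ℝ) / t) ≤ moment A φ k ^ ((1 : ℝ) / k) := by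
  obtain ⟨m, hm⟩ := hparity
  obtain rfl : k = t + 2 * m := by omega
  have hmono : Monotone fun m : ℕ => moment A φ (t + 2 * m) ^ ((1 : ℝ) / (t + 2 * m : ℕ)) :=
    monotone_nat_of_le_succ fun m =>
      rpow_one_div_le_rpow_one_div_of_pow_le_pow (moment_nonneg hA hφ _) (moment_nonneg hA hφ _)
        (by omega) (by omega) (moment_pow_add_two_le hA hs hφ hφ₀ (t + 2 * m))
  simpa only [mul_zero, add_zero] using hmono m.zero_le

end Moment

theorem w_eq_moment (n k : ℕ) (G : SimpleGraph (Fin n)) [DecidableRel G.Adj] :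
    w n k G = moment (G.adjMatrix ℝ) 1 k := by
  have hcount : (walkCount n k G : ℝ) = 1 ⬝ᵥ G.adjMatrix ℝ ^ k *ᵥ 1 := by
    rw [dotProduct_pow_mulVec_eq_sum_prod, walkCount, Nat.card_eq_fintype_card,
      Fintype.card_subtype]
    simp [SimpleGraph.adjMatrix_apply, Fintype.prod_boole]
  rw [w, moment, hcount, one_dotProduct_one, Fintype.card_fin]

/-- For a graph with at least one edge and odd `k ≥ t ≥ 1`,
`w_k(G)^{1/k} ≥ w_t(G)^{1/t}`: the normalized walk counts `w_j(G)^{1/j}` are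
non-decreasing along odd `j`. -/
theorem walk_root_mono (n k t : ℕ) (G : SimpleGraph (Fin n))
    (hG : ∃ a b, G.Adj a b)
    (hk : Odd k) (ht : Odd t) (ht1 : 1 ≤ t) (htk : t ≤ k) :
    w n k G ^ ((1 : ℝ) / k) ≥ w n t G ^ ((1 : ℝ) / t) := by
  classical
  have : Nonempty (Fin n) := hG.nonempty
  rw [w_eq_moment, w_eq_moment]
  exact walk_root_mono_general (fun x y => by rw [SimpleGraph.adjMatrix_apply]; split_ifs <;> simp)
    (G.isSymm_adjMatrix) zero_le_one one_ne_zero ht1 htk (Nat.Odd.sub_odd hk ht)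
end
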